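/- Let S = {(x₁,1), (x₂,−1)} ⊆ ℝ^d × {−1,+1} with d(x₁,x₂) = 2γ* (so the max-margin of S is γ*). Let X₊' consist of N ≥ 16d points x₁ + z_j where z₁,…,z_N are i.i.d. uniform on the sphere of radius r in ℝ^d, and let S' = X₊' × {1}. If r ≥ (8e²√(2d)/π^{3/2})·γ*, then with probability at least 1 − 2e^{−d/6}, the augmented set S ∪ S' is not linearly separable. -/

import Mathlib

open scoped RealInnerProductSpace ENNReal Classical
open Metric Set MeasureTheory

noncomputable section

/-- `ℝ^d` with the Euclidean (ℓ²) structure. -/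
abbrev Euc (d : ℕ) := EuclideanSpace ℝ (Fin d)

/-- `X₊`: the set of points of `T` with label `1`. -/
def posPts {d : ℕ} (T : Set (Euc d × ℝ)) : Set (Euc d) := {x | (x, (1 : ℝ)) ∈ T}

/-- `X₋`: the set of points of `T` with label `-1`. -/
def negPts {d : ℕ} (T : Set (Euc d × ℝ)) : Set (Euc d) := {x | (x, (-1 : ℝ)) ∈ T}

/-- All labels in `T` are `±1`, i.e. `T ⊆ ℝ^d × {-1, +1}`. -/
def LabelsPM {d : ℕ} (T : Set (Euc d × ℝ)) : Prop := ∀ p ∈ T, p.2 = 1 ∨ p.2 = -1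

/-- `(w, b)` is a linear separator of the labeled set `T`:
`w ≠ 0` and `y(⟨w,x⟩ + b) ≥ 0` for all `(x,y) ∈ T`. -/
def IsLinSep {d : ℕ} (w : Euc d) (b : ℝ) (T : Set (Euc d × ℝ)) : Prop :=
  w ≠ 0 ∧ ∀ p ∈ T, p.2 * (⟪w, p.1⟫ + b) ≥ 0

/-- The hyperplane `H = {x | ⟨w,x⟩ + b = 0}` associated with `(w, b)`. -/
def hyperplane {d : ℕ} (w : Euc d) (b : ℝ) : Set (Euc d) := {x | ⟪w, x⟫ + b = 0}

/-- The margin `γ_{(w,b)}(S)`: infimum over `(x,y) ∈ S` of the distance from `x`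
to the hyperplane of `(w,b)`. -/
def linMargin {d : ℕ} (S : Set (Euc d × ℝ)) (w : Euc d) (b : ℝ) : ℝ :=
  ⨅ p : S, Metric.infDist (p : Euc d × ℝ).1 (hyperplane w b)

/-- `γ` is the max-margin of `S`: attained by some linear separator of `S`, and an upper
bound on the margin of every linear separator of `S`. -/
def IsMaxMargin {d : ℕ} (S : Set (Euc d × ℝ)) (γ : ℝ) : Prop :=
  (∃ w b, IsLinSep w b S ∧ linMargin S w b = γ) ∧
    ∀ w b, IsLinSep w b S → linMargin S w b ≤ γ

/-- The worst-case margin `α(S,S')` (an extended real): the infimum over all linear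
separators of `S ∪ S'` of their margin on `S`, or `-∞` if no separator exists. -/
def alpha {d : ℕ} (S S' : Set (Euc d × ℝ)) : EReal :=
  if ∃ w b, IsLinSep w b (S ∪ S') then
    sInf {m : EReal | ∃ w b, IsLinSep w b (S ∪ S') ∧ m = ((linMargin S w b : ℝ) : EReal)}
  else ⊥

/-- `S_r`: the set of labeled points obtained by moving a point of `S` by distance at
most `r`, keeping its label; i.e. `((X₊)_r × {1}) ∪ ((X₋)_r × {-1})`. -/
def ballAug {d : ℕ} (S : Set (Euc d × ℝ)) (r : ℝ) : Set (Euc d × ℝ) :=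
  {p | (p.2 = 1 ∧ Metric.infDist p.1 (posPts S) ≤ r) ∨
       (p.2 = -1 ∧ Metric.infDist p.1 (negPts S) ≤ r)}

/-- A `{±1}`-valued classifier. -/
def IsClassifier {d : ℕ} (f : Euc d → ℝ) : Prop := ∀ x, f x = 1 ∨ f x = -1

/-- `f` separates the labeled set `T`: `f x = y` for all `(x,y) ∈ T`. -/
def Separates {d : ℕ} (f : Euc d → ℝ) (T : Set (Euc d × ℝ)) : Prop :=
  ∀ p ∈ T, f p.1 = p.2

/-- The circumradius of `A`: the radius of the smallest closed ball containing `A`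
(as an extended nonnegative real). -/
def circumradius {d : ℕ} (A : Set (Euc d)) : ℝ≥0∞ :=
  ⨅ c : Euc d, ⨆ x ∈ A, edist c x

/-- `f` is `ε`-respectful of `T`: `f = 1` on the convex hull of any subset of `X₊(T)` of
circumradius at most `ε`, and `f = -1` on the convex hull of any subset of `X₋(T)` of
circumradius at most `ε`. (Taking `ε = ⊤` gives respectful classifiers.) -/
def RespectfulOf {d : ℕ} (ε : ℝ≥0∞) (f : Euc d → ℝ) (T : Set (Euc d × ℝ)) : Prop :=
  (∀ A ⊆ posPts T, circumradius A ≤ ε → ∀ x ∈ convexHull ℝ A, f x = 1) ∧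
  (∀ B ⊆ negPts T, circumradius B ≤ ε → ∀ x ∈ convexHull ℝ B, f x = -1)

/-- `R_ε(T)`, the set of `ε`-respectful classifiers of `T`. -/
def respectfulSet {d : ℕ} (ε : ℝ≥0∞) (T : Set (Euc d × ℝ)) : Set (Euc d → ℝ) :=
  {f | IsClassifier f ∧ RespectfulOf ε f T}

/-- The margin `γ_f(S)` of a classifier `f` on `S`:
`min_{(x,y) ∈ S} d(x, f⁻¹(-y))`. -/
def clsMargin {d : ℕ} (f : Euc d → ℝ) (S : Set (Euc d × ℝ)) : ℝ :=
  ⨅ p : S, Metric.infDist (p : Euc d × ℝ).1 (f ⁻¹' {-(p : Euc d × ℝ).2})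

/-- `γ_f(S,S')`: the margin of `f` on `S` if `f` separates `S ∪ S'`, and `-∞` otherwise. -/
def clsMarginAug {d : ℕ} (f : Euc d → ℝ) (S S' : Set (Euc d × ℝ)) : EReal :=
  if Separates f (S ∪ S') then ((clsMargin f S : ℝ) : EReal) else ⊥

/-- The distance `d(P, Q) = inf {d(a,b) | a ∈ P, b ∈ Q}` between two sets,
as an extended nonnegative real. -/
def setSepDist {d : ℕ} (P Q : Set (Euc d)) : ℝ≥0∞ :=
  ⨅ a ∈ P, EMetric.infEdist a Q

/-- The uniform (rotation-invariant) probability measure on the sphere of radius `r`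
centered at the origin in `ℝ^d`, obtained by normalizing the surface measure induced by
Lebesgue measure on the unit sphere and pushing forward by scaling by `r`. -/
def uniformSphere (d : ℕ) (r : ℝ) : Measure (Euc d) :=
  (((volume : Measure (Euc d)).toSphere) Set.univ)⁻¹ •
    ((((volume : Measure (Euc d)).toSphere).map (Subtype.val)).map (fun x => r • x))

end

/-!
Put `u = x₁ - x₂`. A separator `(w, b)` of the augmented set has `0 ≤ ⟪w, u⟫` and
`0 ≤ ⟪w, z j + u⟫` for all `j`, so all the *far* `z j`, those with `⟪u, z j⟫ < -‖u‖²`, project to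
one side of a hyperplane of `uᗮ`. A `z j` is far with probability at least `1/4`, because a thin
slab takes up little of the ball: squeezing the ball towards the axis `ℝ ∙ u` while stretching it
along that axis multiplies the volume of the slab and still maps it into the ball.

Reflection in `ℝ ∙ u` preserves the uniform measure and farness but negates the projection to `uᗮ`.
Hence the probability of one-sidedness does not change when the members of a random subfamily are
reflected. For a fixed family in general position, the subfamilies whose reflection makes it
one-sided form a set system shattering no more than `d - 1` of the far indices, and Pajor's form of
the Sauer–Shelah lemma bounds their number. Averaging gives at most `2 ^ (d - 1) * (15 / 16) ^ N`.
-/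

section GeneralPosition

open Module Finset

variable {𝕜 E ι : Type*} [Field 𝕜] [AddCommGroup E] [Module 𝕜 E]

variable (𝕜) in
/-- Linear general position of a family of vectors: any `finrank 𝕜 E` of them, or fewer, are
linearly independent. -/
def InLinearGeneralPosition (p : ι → E) : Prop :=
  ∀ t : Finset ι, #t ≤ finrank 𝕜 E → LinearIndepOn 𝕜 p t

variable [FiniteDimensional 𝕜 E] {p : ι → E}

lemma InLinearGeneralPosition.exists_sum_smul_eq_zero (hp : InLinearGeneralPosition 𝕜 p)
    {s : Finset ι} (hs : #s = finrank 𝕜 E + 1) :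
    ∃ c : ι → 𝕜, ∑ j ∈ s, c j • p j = 0 ∧ ∀ j ∈ s, c j ≠ 0 := by
  have hdep : ¬ LinearIndepOn 𝕜 p (s : Set ι) := fun h ↦ by
    have := h.linearIndependent.fintype_card_le_finrank
    simp [hs] at this
  rw [linearIndepOn_finset_iff] at hdep
  push Not at hdep
  obtain ⟨c, hc, i, hi, hci⟩ := hdep
  refine ⟨c, hc, fun j hj hcj ↦ hci ?_⟩
  have hindep := hp (s.erase j) (by rw [card_erase_of_mem hj]; omega)
  refine linearIndepOn_finset_iff.1 hindep c ?_ i (mem_erase.2 ⟨?_, hi⟩)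
  · rw [sum_erase _ (by rw [hcj, zero_smul]), hc]
  · rintro rfl
    exact hci hcj

lemma InLinearGeneralPosition.eq_zero_of_forall_mem (hp : InLinearGeneralPosition 𝕜 p)
    {t : Finset ι} (ht : #t = finrank 𝕜 E) {f : Dual 𝕜 E} (hf : ∀ j ∈ t, f (p j) = 0) :
    f = 0 := by
  have hspan := (hp t ht.le).linearIndependent.span_eq_top_of_card_eq_finrank' (by simpa using ht)
  exact LinearMap.ext_on_range hspan fun j ↦ hf j j.2

variable [LinearOrder 𝕜]

variable (𝕜) in
/-- `t` is cut out of the vectors `p j`, `j ∈ s`, by a hyperplane through the origin. Vectors lying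
on the hyperplane may be counted on either side. -/
def WeaklyCuts (p : ι → E) (s t : Finset ι) : Prop :=
  ∃ f : Dual 𝕜 E, f ≠ 0 ∧ ∀ j ∈ s, (j ∈ t → f (p j) ≤ 0) ∧ (j ∉ t → 0 ≤ f (p j))

variable [IsStrictOrderedRing 𝕜]

/-- The coefficients of a linear relation among `finrank 𝕜 E + 1` of the vectors have a sign pattern
that no hyperplane can cut out. -/
theorem InLinearGeneralPosition.card_le_finrank (hp : InLinearGeneralPosition 𝕜 p) {s : Finset ι}
    (hs : ∀ t ⊆ s, WeaklyCuts 𝕜 p s t) : #s ≤ finrank 𝕜 E := by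
  by_contra! hlt
  obtain ⟨K, hKs, hK⟩ := exists_subset_card_eq hlt
  obtain ⟨c, hc, hc0⟩ := hp.exists_sum_smul_eq_zero hK
  obtain ⟨f, hf0, hf⟩ := hs {j ∈ K | 0 < c j} ((filter_subset _ _).trans hKs)
  have hterm : ∀ j ∈ K, c j * f (p j) ≤ 0 := fun j hj ↦ by
    obtain ⟨hpos, hneg⟩ := hf j (hKs hj)
    rcases lt_or_ge 0 (c j) with h | h
    · exact mul_nonpos_of_nonneg_of_nonpos h.le (hpos (by simp [hj, h]))
    · exact mul_nonpos_of_nonpos_of_nonneg h (hneg (by simp [h]))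
  have hsum : ∑ j ∈ K, c j * f (p j) = 0 := by simpa using congrArg f hc
  have hvanish : ∀ j ∈ K, f (p j) = 0 := fun j hj ↦
    (mul_eq_zero.1 ((sum_eq_zero_iff_of_nonpos hterm).1 hsum j hj)).resolve_left (hc0 j hj)
  obtain ⟨t, htK, ht⟩ := exists_subset_card_eq (show finrank 𝕜 E ≤ #K by omega)
  exact hf0 (hp.eq_zero_of_forall_mem ht fun j hj ↦ hvanish j (htK hj))

end GeneralPosition

section Counting

open Module Finset

variable {ι : Type*} [Fintype ι]

/-- Pajor's inequality bounds the size of `𝒜` by the number of shattered sets, each of which is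
counted with a weight `x ^ #(s ∩ J) / x ^ n ≥ 1`. -/
lemma pow_mul_card_le_prod_of_shatters {R : Type*} [CommSemiring R] [PartialOrder R]
    [IsOrderedRing R] [DecidableEq ι] {𝒜 : Finset (Finset ι)} {J : Finset ι} {n : ℕ}
    (h𝒜 : ∀ s ⊆ J, 𝒜.Shatters s → #s ≤ n) {x : R} (hx0 : 0 ≤ x) (hx1 : x ≤ 1) :
    x ^ n * #𝒜 ≤ ∏ j, (1 + if j ∈ J then x else 1) := by
  have hweight : ∀ s : Finset ι, ∏ j ∈ s, (if j ∈ J then x else 1) = x ^ #(s ∩ J) := fun _ ↦ by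
    simp only [prod_ite, prod_const, one_pow, mul_one, filter_mem_eq_inter]
  have hcard : ∀ s ∈ 𝒜.shatterer, #(s ∩ J) ≤ n := fun s hs ↦
    h𝒜 _ inter_subset_right ((mem_shatterer.1 hs).mono_right inter_subset_left)
  calc x ^ n * #𝒜 ≤ x ^ n * #𝒜.shatterer :=
        mul_le_mul_of_nonneg_left (Nat.mono_cast 𝒜.card_le_card_shatterer) (pow_nonneg hx0 n)
    _ = ∑ _s ∈ 𝒜.shatterer, x ^ n := by rw [sum_const, nsmul_eq_mul, mul_comm]
    _ ≤ ∑ s ∈ 𝒜.shatterer, x ^ #(s ∩ J) :=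
        sum_le_sum fun s hs ↦ pow_le_pow_of_le_one hx0 hx1 (hcard s hs)
    _ ≤ ∑ s, x ^ #(s ∩ J) :=
        sum_le_sum_of_subset_of_nonneg (subset_univ _) fun _ _ _ ↦ pow_nonneg hx0 _
    _ = ∏ j, (1 + if j ∈ J then x else 1) := by
        simp only [prod_one_add, Finset.powerset_univ, hweight]

theorem InLinearGeneralPosition.pow_mul_card_weaklyCuts_le {𝕜 E : Type*} [Field 𝕜] [LinearOrder 𝕜]
    [IsStrictOrderedRing 𝕜] [AddCommGroup E] [Module 𝕜 E] [FiniteDimensional 𝕜 E] {p : ι → E}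
    (hp : InLinearGeneralPosition 𝕜 p) (J : Finset ι) {x : ℝ} (hx0 : 0 ≤ x) (hx1 : x ≤ 1) :
    x ^ finrank 𝕜 E * #{A | WeaklyCuts 𝕜 p J A} ≤ ∏ j, (1 + if j ∈ J then x else 1) := by
  refine pow_mul_card_le_prod_of_shatters (fun s hsJ hs ↦ ?_) hx0 hx1
  refine hp.card_le_finrank fun t hts ↦ ?_
  obtain ⟨A, hA, rfl⟩ := hs hts
  obtain ⟨f, hf0, hf⟩ := (mem_filter.1 hA).2
  exact ⟨f, hf0, fun j hj ↦ by simpa [hj] using hf j (hsJ hj)⟩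

end Counting

section RandomGeneralPosition

open Module

variable {ι : Type*}

lemma measure_pi_eq_zero_of_forall_update [Fintype ι] {X : ι → Type*} [∀ i, MeasurableSpace (X i)]
    (μ : ∀ i, Measure (X i)) [∀ i, SigmaFinite (μ i)] (j : ι) {s : Set (∀ i, X i)}
    (hs : MeasurableSet s) (h : ∀ z, μ j {x | Function.update z j x ∈ s} = 0) :
    Measure.pi μ s = 0 := by
  rcases isEmpty_or_nonempty (∀ i, X i) with _ | ⟨⟨z⟩⟩
  · rw [Set.eq_empty_of_isEmpty s, measure_empty]
  have hslice : ∀ y, ∫⁻ x, s.indicator 1 (Function.update y j x) ∂μ j = 0 := fun y ↦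
    (lintegral_indicator_one (measurable_update y hs)).trans (h y)
  rw [← lintegral_indicator_one hs, lintegral_eq_lmarginal_univ z,
    lmarginal_erase' _ (measurable_one.indicator hs) (Finset.mem_univ j)]
  simp only [hslice]
  simp [lmarginal]

variable {X E : Type*} [MeasurableSpace X] [NormedAddCommGroup E] [NormedSpace ℝ E]
  [FiniteDimensional ℝ E] [MeasurableSpace E] [BorelSpace E]

lemma measurableSet_linearIndepOn {p : X → E} (hp : Measurable p) (t : Finset ι) :
    MeasurableSet {x : ι → X | LinearIndepOn ℝ (p ∘ x) (t : Set ι)} := by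
  have hopen : IsOpen {v : t → E | LinearIndependent ℝ v} := isOpen_setOfPred_linearIndependent
  exact (measurable_pi_lambda _ fun i : t ↦ hp.comp (measurable_pi_apply _)) hopen.measurableSet

variable [Fintype ι]

/-- Adding the vectors one at a time, each new one avoids the span of the previous ones. -/
lemma ae_linearIndepOn (μ : Measure X) [SigmaFinite μ] {p : X → E} (hp : Measurable p)
    (hnull : ∀ W : Submodule ℝ E, W ≠ ⊤ → μ (p ⁻¹' W) = 0) (t : Finset ι)
    (ht : t.card ≤ finrank ℝ E) :
    ∀ᵐ x ∂Measure.pi fun _ : ι ↦ μ, LinearIndepOn ℝ (p ∘ x) (t : Set ι) := by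
  induction t using Finset.induction_on with
  | empty => simp [linearIndepOn_empty]
  | insert j t hj ih =>
    rw [Finset.card_insert_of_notMem hj] at ht
    set bad : Set (ι → X) := {x | LinearIndepOn ℝ (p ∘ x) (t : Set ι)} \
      {x | LinearIndepOn ℝ (p ∘ x) (insert j t : Finset ι)} with hbad
    have hbad_null : Measure.pi (fun _ ↦ μ) bad = 0 := by
      refine measure_pi_eq_zero_of_forall_update _ j ((measurableSet_linearIndepOn hp t).diff
        (measurableSet_linearIndepOn hp _)) fun x ↦ ?_
      set W := Submodule.span ℝ ((t.image (p ∘ x) : Finset E) : Set E) with hW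
      have hWtop : W ≠ ⊤ := fun h ↦ by
        have hle : finrank ℝ W ≤ _ := finrank_span_finset_le_card (R := ℝ) (t.image (p ∘ x))
        rw [h, finrank_top] at hle
        exact absurd (hle.trans Finset.card_image_le) (by omega)
      refine measure_mono_null (fun y hy ↦ ?_) (hnull W hWtop)
      have hupdate : EqOn (p ∘ Function.update x j y) (p ∘ x) t := fun i hi ↦ by
        have : i ≠ j := by rintro rfl; exact hj hi
        simp [this]
      obtain ⟨hindep, hdep⟩ := hy
      simp only [mem_ofPred_eq, Finset.coe_insert, linearIndepOn_insert (Finset.mem_coe.not.2 hj),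
        hupdate.image_eq] at hindep hdep
      by_contra hyW
      exact hdep ⟨hindep, by simpa [hW] using hyW⟩
    filter_upwards [ih (by omega), compl_mem_ae_iff.2 hbad_null] with x hx hx'
    by_contra hdep
    exact hx' ⟨hx, hdep⟩

theorem ae_inLinearGeneralPosition (μ : Measure X) [SigmaFinite μ] {p : X → E} (hp : Measurable p)
    (hnull : ∀ W : Submodule ℝ E, W ≠ ⊤ → μ (p ⁻¹' W) = 0) :
    ∀ᵐ x ∂Measure.pi fun _ : ι ↦ μ, InLinearGeneralPosition ℝ (p ∘ x) := by
  simp only [InLinearGeneralPosition, ae_all_iff]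
  exact fun t ht ↦ ae_linearIndepOn μ hp hnull t ht

end RandomGeneralPosition

section OneSided

open Module

variable {ι X E : Type*}

/-- The family `x` with `σ` applied to the members indexed by `A`. -/
noncomputable def flipOn (σ : X → X) (A : Finset ι) (x : ι → X) : ι → X :=
  fun j ↦ (if j ∈ A then σ else id) (x j)

/-- The families `x` for which the vectors `p (x j)` with `x j ∈ S` lie in a common closed
half-space bounded by a hyperplane through the origin. -/
def oneSidedSet (ι : Type*) [AddCommGroup E] [Module ℝ E] [TopologicalSpace E] (p : X → E)
    (S : Set X) : Set (ι → X) :=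
  {x | ∃ f : StrongDual ℝ E, f ≠ 0 ∧ ∀ j, x j ∈ S → 0 ≤ f (p (x j))}

lemma weaklyCuts_of_flipOn_mem_oneSidedSet [Fintype ι] [AddCommGroup E] [Module ℝ E]
    [TopologicalSpace E] {p : X → E} {S : Set X} {σ : X → X} (hpσ : ∀ x, p (σ x) = -p x)
    (hσS : ∀ x, σ x ∈ S ↔ x ∈ S) {x : ι → X} {A : Finset ι}
    (hx : flipOn σ A x ∈ oneSidedSet ι p S) :
    WeaklyCuts ℝ (p ∘ x) {j | x j ∈ S} A := by
  obtain ⟨f, hf0, hf⟩ := hx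
  refine ⟨f, fun h ↦ hf0 (ContinuousLinearMap.coe_injective h),
    fun j hj ↦ ⟨fun hA ↦ ?_, fun hA ↦ ?_⟩⟩
  all_goals
    have hjS : x j ∈ S := by simpa using hj
    simpa [flipOn, hA, hσS, hpσ, hjS] using hf j

/-- The functional may be normalised, so the set is a projection along a compact sphere. -/
lemma isClosed_oneSidedSet [NormedAddCommGroup E] [NormedSpace ℝ E]
    [FiniteDimensional ℝ E] [TopologicalSpace X] {p : X → E} (hp : Continuous p) {S : Set X}
    (hS : IsOpen S) : IsClosed (oneSidedSet ι p S) := by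
  have : ProperSpace (StrongDual ℝ E) := FiniteDimensional.proper_real _
  have hproj : oneSidedSet ι p S = Prod.snd '' {q : sphere (0 : StrongDual ℝ E) 1 × (ι → X) |
      ∀ j, q.2 j ∈ Sᶜ ∨ 0 ≤ (q.1 : StrongDual ℝ E) (p (q.2 j))} := by
    ext x
    constructor
    · rintro ⟨f, hf0, hf⟩
      refine ⟨(⟨‖f‖⁻¹ • f, by simp [norm_smul, hf0]⟩, x), fun j ↦ ?_, rfl⟩
      exact (em (x j ∈ S)).symm.imp id fun hj ↦ mul_nonneg (by positivity) (hf j hj)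
    · rintro ⟨⟨f, y⟩, hf, rfl⟩
      exact ⟨f, ne_zero_of_mem_unit_sphere f, fun j hj ↦ (hf j).resolve_left (not_not.2 hj)⟩
  rw [hproj]
  refine isClosedMap_snd_of_compactSpace _ ?_
  simp only [ofPred_forall]
  refine isClosed_iInter fun j ↦ ?_
  have hj : Continuous fun q : sphere (0 : StrongDual ℝ E) 1 × (ι → X) ↦ q.2 j := by fun_prop
  have heval : Continuous fun q : sphere (0 : StrongDual ℝ E) 1 × (ι → X) ↦
      (q.1 : StrongDual ℝ E) (p (q.2 j)) := by fun_prop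
  exact (hS.isClosed_compl.preimage hj).union (isClosed_le continuous_const heval)

variable [Fintype ι]

lemma measurePreserving_flipOn [MeasurableSpace X] {μ : Measure X} [SigmaFinite μ] {σ : X → X}
    (hσ : MeasurePreserving σ μ μ) (A : Finset ι) :
    MeasurePreserving (flipOn σ A) (Measure.pi fun _ ↦ μ) (Measure.pi fun _ ↦ μ) :=
  measurePreserving_pi _ _ fun j ↦ by
    split_ifs
    exacts [hσ, .id μ]

lemma two_pow_mul_measureReal_eq_integral_card_flipOn [MeasurableSpace X] {μ : Measure X}
    [IsFiniteMeasure μ] {σ : X → X} (hσ : MeasurePreserving σ μ μ) {B : Set (ι → X)}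
    (hB : MeasurableSet B) :
    2 ^ Fintype.card ι * (Measure.pi fun _ ↦ μ).real B =
      ∫ x, (Finset.card {A | flipOn σ A x ∈ B} : ℝ) ∂Measure.pi fun _ ↦ μ := by
  have hflip (A : Finset ι) := measurePreserving_flipOn hσ A
  have hcard (x : ι → X) : (Finset.card {A | flipOn σ A x ∈ B} : ℝ) =
      ∑ A, (flipOn σ A ⁻¹' B).indicator (fun _ ↦ (1 : ℝ)) x := by
    simp [indicator_apply]
  have hterm (A : Finset ι) : ∫ x, (flipOn σ A ⁻¹' B).indicator (fun _ ↦ (1 : ℝ)) x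
      ∂Measure.pi (fun _ ↦ μ) = (Measure.pi fun _ ↦ μ).real B := by
    rw [integral_indicator_const _ ((hflip A).measurable hB),
      (hflip A).measureReal_preimage hB.nullMeasurableSet, smul_eq_mul, mul_one]
  simp_rw [hcard]
  rw [integral_finsetSum _ fun A _ ↦
    (integrable_const (1 : ℝ)).indicator ((hflip A).measurable hB)]
  simp [hterm]

lemma integral_one_add_ite [MeasurableSpace X] (μ : Measure X) [IsProbabilityMeasure μ] {S : Set X}
    (hS : MeasurableSet S) (t : ℝ) :
    ∫ x, (1 + if x ∈ S then t else 1) ∂μ = 2 - (1 - t) * μ.real S := by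
  have hindicator (x : X) :
      (1 + if x ∈ S then t else 1) = 2 - S.indicator (fun _ ↦ 1 - t) x := by
    by_cases hx : x ∈ S <;> simp [hx] <;> ring
  simp_rw [hindicator]
  rw [integral_sub (integrable_const _) ((integrable_const _).indicator hS),
    integral_indicator_const _ hS]
  simp [mul_comm]

variable [NormedAddCommGroup E] [NormedSpace ℝ E] [FiniteDimensional ℝ E]
  [TopologicalSpace X] [SecondCountableTopology X] [MeasurableSpace X] [BorelSpace X]
  {μ : Measure X} [IsProbabilityMeasure μ] {p : X → E} {S : Set X} {σ : X → X}

/-- By symmetry the probability is unchanged when a random subfamily is flipped by `σ`, and for a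
fixed family in general position few of the flips are one-sided. -/
theorem pow_mul_measureReal_oneSidedSet_le (hσ : MeasurePreserving σ μ μ)
    (hσS : ∀ x, σ x ∈ S ↔ x ∈ S) (hS : IsOpen S) (hp : Continuous p) (hpσ : ∀ x, p (σ x) = -p x)
    (hnull : ∀ W : Submodule ℝ E, W ≠ ⊤ → μ (p ⁻¹' W) = 0) {t : ℝ} (ht0 : 0 ≤ t) (ht1 : t ≤ 1) :
    t ^ finrank ℝ E * (Measure.pi fun _ ↦ μ).real (oneSidedSet ι p S) ≤
      (1 - (1 - t) / 2 * μ.real S) ^ Fintype.card ι := by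
  borelize E
  set P : Measure (ι → X) := Measure.pi fun _ ↦ μ
  set B := oneSidedSet ι p S
  have hcount : ∀ᵐ x ∂P, t ^ finrank ℝ E * (Finset.card {A | flipOn σ A x ∈ B} : ℝ) ≤
      ∏ j, (1 + if x j ∈ S then t else 1) := by
    filter_upwards [ae_inLinearGeneralPosition μ hp.measurable hnull] with x hx
    have hpow := hx.pow_mul_card_weaklyCuts_le {j | x j ∈ S} ht0 ht1
    simp only [Finset.mem_filter_univ] at hpow
    refine le_trans ?_ hpow
    gcongr with A
    exact weaklyCuts_of_flipOn_mem_oneSidedSet hpσ hσS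
  have hintegrable : Integrable (fun x ↦ 1 + if x ∈ S then t else 1) μ :=
    (integrable_const _).add <| Integrable.of_bound
      (Measurable.ite hS.measurableSet measurable_const measurable_const).aestronglyMeasurable 1
      (.of_forall fun x ↦ by split_ifs <;> simp [abs_of_nonneg, *])
  have hmean : 2 ^ Fintype.card ι * (t ^ finrank ℝ E * P.real B) ≤
      (2 - (1 - t) * μ.real S) ^ Fintype.card ι :=
    calc 2 ^ Fintype.card ι * (t ^ finrank ℝ E * P.real B)
        = ∫ x, t ^ finrank ℝ E * (Finset.card {A | flipOn σ A x ∈ B} : ℝ) ∂P := by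
          rw [mul_left_comm, two_pow_mul_measureReal_eq_integral_card_flipOn hσ
            (isClosed_oneSidedSet hp hS).measurableSet, integral_const_mul]
      _ ≤ ∫ x, ∏ j, (1 + if x j ∈ S then t else 1) ∂P :=
          integral_mono_of_nonneg (.of_forall fun x ↦ by positivity)
            (.fintype_prod fun _ ↦ hintegrable) hcount
      _ = (2 - (1 - t) * μ.real S) ^ Fintype.card ι := by
          rw [integral_fintype_prod_eq_prod (fun _ : ι ↦ fun x ↦ 1 + if x ∈ S then t else 1)]
          simp [integral_one_add_ite μ hS.measurableSet t]
  have hscale : 1 - (1 - t) / 2 * μ.real S = (2 - (1 - t) * μ.real S) / 2 := by ring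
  rwa [hscale, div_pow, le_div_iff₀' (by positivity)]

end OneSided

section AxialScaling

open Module

variable {F : Type*} [NormedAddCommGroup F] [InnerProductSpace ℝ F] {e : F} {a b t : ℝ}

variable (e a b) in
/-- For a unit vector `e`, the linear map scaling the line `ℝ ∙ e` by `b` and its orthogonal
complement by `a`. -/
noncomputable def axialScaling : F →ₗ[ℝ] F := a • LinearMap.id + (b - a) • (innerₛₗ ℝ e).smulRight e

lemma axialScaling_apply (x : F) : axialScaling e a b x = a • x + ((b - a) * ⟪e, x⟫) • e := by
  simp [axialScaling, smul_smul]

lemma norm_axialScaling_sq (he : ‖e‖ = 1) (x : F) :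
    ‖axialScaling e a b x‖ ^ 2 = a ^ 2 * (‖x‖ ^ 2 - ⟪e, x⟫ ^ 2) + b ^ 2 * ⟪e, x⟫ ^ 2 := by
  rw [axialScaling_apply, norm_add_sq_real, norm_smul, norm_smul, inner_smul_left,
    inner_smul_right, he, real_inner_comm]
  simp only [mul_pow, Real.norm_eq_abs, sq_abs, conj_trivial]
  ring

variable [FiniteDimensional ℝ F]

lemma det_axialScaling (he : ‖e‖ = 1) (ha : a ≠ 0) :
    (axialScaling e a b).det = b * a ^ (finrank ℝ F - 1) := by
  have htransvection : axialScaling e a b =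
      a • LinearMap.transvection (innerₛₗ ℝ e) ((b / a - 1) • e) := by
    ext x
    have hcoeff : a * (⟪e, x⟫ * (b / a - 1)) = (b - a) * ⟪e, x⟫ := by field_simp
    simp [axialScaling_apply, LinearMap.transvection.apply, smul_smul, hcoeff]
  have : Nontrivial F := ⟨e, 0, by rw [← norm_ne_zero_iff, he]; exact one_ne_zero⟩
  obtain ⟨n, hn⟩ := Nat.exists_eq_succ_of_ne_zero (finrank_pos (R := ℝ) (M := F)).ne'
  rw [htransvection, LinearMap.det_smul, LinearMap.transvection.det, hn, Nat.succ_sub_one, pow_succ]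
  simp only [innerₛₗ_apply_apply, inner_smul_right, real_inner_self_eq_norm_sq, he]
  field_simp
  ring

variable [MeasurableSpace F] [BorelSpace F]

/-- The axial scaling that contracts `(ℝ ∙ e)ᗮ` by `a` and stretches the slab to half-width `b`
keeps it inside the unit ball. -/
lemma ofReal_mul_volume_slab_le (he : ‖e‖ = 1) (ht : 0 < t) (ha : 0 < a) (hb : 0 ≤ b)
    (hab : a ^ 2 + b ^ 2 ≤ 1) :
    ENNReal.ofReal (b / t * a ^ (finrank ℝ F - 1)) *
      volume {x : F | ‖x‖ ≤ 1 ∧ |⟪e, x⟫| ≤ t} ≤ volume (ball (0 : F) 1) := by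
  have himage : axialScaling e a (b / t) '' {x : F | ‖x‖ ≤ 1 ∧ |⟪e, x⟫| ≤ t} ⊆ closedBall 0 1 := by
    rintro _ ⟨x, ⟨hx, hxt⟩, rfl⟩
    have hin : ⟪e, x⟫ ^ 2 ≤ t ^ 2 := sq_le_sq' (abs_le.1 hxt).1 (abs_le.1 hxt).2
    rw [mem_closedBall_zero_iff, ← sq_le_one_iff₀ (norm_nonneg _), norm_axialScaling_sq he]
    calc a ^ 2 * (‖x‖ ^ 2 - ⟪e, x⟫ ^ 2) + (b / t) ^ 2 * ⟪e, x⟫ ^ 2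
        ≤ a ^ 2 * 1 + (b / t) ^ 2 * t ^ 2 := by
          gcongr
          linarith [sq_nonneg ⟪e, x⟫, pow_le_one₀ (n := 2) (norm_nonneg x) hx]
      _ = a ^ 2 + b ^ 2 := by field_simp
      _ ≤ 1 := hab
  have hvol := measure_mono (μ := volume) himage
  rwa [Measure.addHaar_image_linearMap, det_axialScaling he ha.ne', abs_of_nonneg (by positivity),
    Measure.addHaar_unitClosedBall_eq_addHaar_unitBall] at hvol

lemma one_le_sqrt_mul_sqrt_pow (n : ℕ) :
    1 ≤ √(Real.exp 1 * (n + 1)) * (√(1 / (n + 1)) * √(n / (n + 1)) ^ (n - 1)) := by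
  rcases n.eq_zero_or_pos with rfl | hn
  · simp
  have : (0 : ℝ) < n := mod_cast hn
  have hexp : (1 + (n : ℝ)⁻¹) ^ (n - 1) ≤ Real.exp 1 :=
    (pow_le_pow_right₀ (by simp) (Nat.sub_le n 1)).trans Real.one_add_inv_pow_le_exp
  have hinv : (n / (n + 1) : ℝ) = (1 + (n : ℝ)⁻¹)⁻¹ := by field_simp
  have hscale : Real.exp 1 * (n + 1) * (1 / (n + 1) * (n / (n + 1)) ^ (n - 1)) =
      Real.exp 1 / (1 + (n : ℝ)⁻¹) ^ (n - 1) := by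
    rw [hinv, inv_pow]
    field_simp
  rw [← one_le_sq_iff₀ (by positivity), mul_pow, mul_pow, pow_right_comm,
    Real.sq_sqrt (by positivity), Real.sq_sqrt (by positivity), Real.sq_sqrt (by positivity),
    hscale]
  exact (one_le_div (by positivity)).2 hexp

lemma volume_slab_le (he : ‖e‖ = 1) (ht : 0 < t) :
    volume {x : F | ‖x‖ ≤ 1 ∧ |⟪e, x⟫| ≤ t} ≤
      ENNReal.ofReal (√(Real.exp 1 * (finrank ℝ F + 1)) * t) * volume (ball (0 : F) 1) := by
  have : Nontrivial F := ⟨e, 0, by rw [← norm_ne_zero_iff, he]; exact one_ne_zero⟩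
  have hn : (0 : ℝ) < finrank ℝ F := by exact_mod_cast finrank_pos
  set n := finrank ℝ F
  set C := √(Real.exp 1 * (n + 1))
  set a := √(n / (n + 1) : ℝ)
  set b := √(1 / (n + 1) : ℝ)
  have hab : a ^ 2 + b ^ 2 ≤ 1 := by
    rw [Real.sq_sqrt (by positivity), Real.sq_sqrt (by positivity)]
    field_simp
    rfl
  have hslab := ofReal_mul_volume_slab_le he ht (a := a) (b := b) (by positivity) (by positivity)
    hab
  have hone : 1 ≤ C * t * (b / t * a ^ (n - 1)) := by
    convert one_le_sqrt_mul_sqrt_pow n using 1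
    field_simp
    rfl
  calc volume {x : F | ‖x‖ ≤ 1 ∧ |⟪e, x⟫| ≤ t}
      ≤ ENNReal.ofReal (C * t * (b / t * a ^ (n - 1))) *
          volume {x : F | ‖x‖ ≤ 1 ∧ |⟪e, x⟫| ≤ t} :=
        le_mul_of_one_le_left' (ENNReal.one_le_ofReal.2 hone)
    _ = ENNReal.ofReal (C * t) * (ENNReal.ofReal (b / t * a ^ (n - 1)) *
          volume {x : F | ‖x‖ ≤ 1 ∧ |⟪e, x⟫| ≤ t}) := by
        rw [ENNReal.ofReal_mul (by positivity), mul_assoc]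
    _ ≤ ENNReal.ofReal (C * t) * volume (ball (0 : F) 1) := by gcongr

end AxialScaling

section Reflection

variable {F : Type*} [NormedAddCommGroup F] [InnerProductSpace ℝ F]

/-- The open half-space of the vectors `x` for which `x + u` lies strictly on the negative side of
`uᗮ`. -/
def farHalfSpace (u : F) : Set F := {x | ⟪u, x⟫ < -‖u‖ ^ 2}

lemma isOpen_farHalfSpace (u : F) : IsOpen (farHalfSpace u) :=
  isOpen_lt (by fun_prop) continuous_const

lemma reflection_mem_farHalfSpace {u x : F} :
    (ℝ ∙ u).reflection x ∈ farHalfSpace u ↔ x ∈ farHalfSpace u := by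
  have hinner := (ℝ ∙ u).reflection.inner_map_map u x
  rw [Submodule.reflection_mem_subspace_eq_self (Submodule.mem_span_singleton_self u)] at hinner
  simp only [farHalfSpace, mem_ofPred_eq, hinner]

lemma orthogonalProjectionOnto_orthogonal_reflection (K : Submodule ℝ F)
    [K.HasOrthogonalProjection] (x : F) :
    Kᗮ.orthogonalProjectionOnto (K.reflection x) = -Kᗮ.orthogonalProjectionOnto x := by
  have hzero := Submodule.orthogonalProjectionOnto_orthogonal_apply_eq_zero
    (K.starProjection_apply_mem x)
  simp [Submodule.reflection_apply, hzero]

lemma finrank_orthogonal_span_singleton_eq_sub_one [FiniteDimensional ℝ F] {u : F} (hu : u ≠ 0) :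
    Module.finrank ℝ (ℝ ∙ u)ᗮ = Module.finrank ℝ F - 1 := by
  have hadd := (ℝ ∙ u).finrank_add_finrank_orthogonal
  rw [finrank_span_singleton hu] at hadd
  omega

lemma norm_sq_mul_inner_orthogonalProjectionOnto (u w x : F) :
    ‖u‖ ^ 2 * ⟪((ℝ ∙ u)ᗮ.orthogonalProjectionOnto w : F), x⟫ =
      ‖u‖ ^ 2 * ⟪w, x⟫ - ⟪w, u⟫ * ⟪u, x⟫ := by
  rcases eq_or_ne u 0 with rfl | hu
  · simp
  have hproj : ((ℝ ∙ u)ᗮ.orthogonalProjectionOnto w : F) = w - (⟪u, w⟫ / ‖u‖ ^ 2) • u := by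
    simp [Submodule.starProjection_orthogonal, Submodule.starProjection_singleton]
  rw [hproj, inner_sub_left, real_inner_smul_left, real_inner_comm u w]
  field_simp [norm_ne_zero_iff.2 hu]

/-- The projection of the separating normal `w` to `uᗮ` is a one-sidedness witness, unless `w` is a
multiple of `u`, in which case no `z j` is far. -/
lemma mem_oneSidedSet_of_forall_inner_nonneg [FiniteDimensional ℝ F] {ι : Type*} {u w : F}
    (hF : 1 < Module.finrank ℝ F) (hu : u ≠ 0) (hw : w ≠ 0) (hwu : 0 ≤ ⟪w, u⟫) {z : ι → F}
    (hz : ∀ j, 0 ≤ ⟪w, z j + u⟫) :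
    z ∈ oneSidedSet ι (ℝ ∙ u)ᗮ.orthogonalProjectionOnto (farHalfSpace u) := by
  have hu2 : 0 < ‖u‖ ^ 2 := by positivity
  set v := (ℝ ∙ u)ᗮ.orthogonalProjectionOnto w with hv
  have hinner (j : ι) : ‖u‖ ^ 2 * ⟪(v : F), z j⟫ =
      ‖u‖ ^ 2 * ⟪w, z j + u⟫ + ⟪w, u⟫ * (-‖u‖ ^ 2 - ⟪u, z j⟫) := by
    rw [norm_sq_mul_inner_orthogonalProjectionOnto, inner_add_right]
    ring
  rcases eq_or_ne v 0 with hv0 | hv0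
  · have hwu_pos : 0 < ⟪w, u⟫ := hwu.lt_of_ne' fun h ↦ by
      simpa [← hv, hv0, h, hu, hw] using norm_sq_mul_inner_orthogonalProjectionOnto u w w
    have hnot_far (j : ι) : z j ∉ farHalfSpace u := fun hj ↦ by
      have hfar : 0 < ⟪w, u⟫ * (-‖u‖ ^ 2 - ⟪u, z j⟫) := mul_pos hwu_pos (sub_pos.2 hj)
      have hsum := hinner j
      rw [hv0, ZeroMemClass.coe_zero, inner_zero_left, mul_zero] at hsum
      linarith [mul_nonneg hu2.le (hz j)]
    have : Nontrivial (ℝ ∙ u)ᗮ := Module.nontrivial_of_finrank_pos (R := ℝ) <| by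
      rw [finrank_orthogonal_span_singleton_eq_sub_one hu]
      omega
    obtain ⟨f, hf⟩ := exists_ne (0 : StrongDual ℝ (ℝ ∙ u)ᗮ)
    exact ⟨f, hf, fun j hj ↦ absurd hj (hnot_far j)⟩
  · refine ⟨innerSL ℝ v, fun h ↦ hv0 ?_, fun j hj ↦ ?_⟩
    · exact inner_self_eq_zero (𝕜 := ℝ).1 (DFunLike.congr_fun h v)
    · have hfar : 0 ≤ ⟪w, u⟫ * (-‖u‖ ^ 2 - ⟪u, z j⟫) :=
        mul_nonneg hwu (sub_nonneg.2 (le_of_lt hj))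
      rw [innerSL_apply_apply, Submodule.inner_orthogonalProjectionOnto_eq_of_mem_left]
      refine nonneg_of_mul_nonneg_right ?_ hu2
      rw [hinner]
      linarith [mul_nonneg hu2.le (hz j)]

end Reflection

section UniformSphere

open scoped Pointwise

variable {d : ℕ} {r : ℝ}

lemma pos_of_euc_ne_zero {u : Euc d} (hu : u ≠ 0) : 0 < d :=
  Nat.pos_of_ne_zero fun h ↦ by
    subst h
    exact hu (Subsingleton.elim _ _)

lemma uniformSphere_apply (hd : 0 < d) (r : ℝ) {s : Set (Euc d)} (hs : MeasurableSet s) :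
    uniformSphere d r s = (volume (ball (0 : Euc d) 1))⁻¹ *
      volume (Ioo (0 : ℝ) 1 • {x : Euc d | ‖x‖ = 1 ∧ r • x ∈ s}) := by
  have hsmul : Measurable fun x : Euc d ↦ r • x := by fun_prop
  have hd0 : (d : ℝ≥0∞) ≠ 0 := mod_cast hd.ne'
  have himage : (Subtype.val '' ((Subtype.val : sphere (0 : Euc d) 1 → Euc d) ⁻¹'
      ((r • ·) ⁻¹' s))) = {x : Euc d | ‖x‖ = 1 ∧ r • x ∈ s} := by
    ext x
    simp [and_comm]
  rw [uniformSphere, Measure.smul_apply, Measure.map_apply hsmul hs,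
    Measure.map_apply measurable_subtype_coe (hsmul hs), Measure.toSphere_apply_univ,
    Measure.toSphere_apply' _ (measurable_subtype_coe (hsmul hs)), smul_eq_mul, himage,
    finrank_euclideanSpace_fin, ENNReal.mul_inv (.inl hd0) (.inl (by simp)), mul_mul_mul_comm,
    ENNReal.inv_mul_cancel hd0 (by simp), one_mul]

lemma isProbabilityMeasure_uniformSphere (hd : 0 < d) (r : ℝ) :
    IsProbabilityMeasure (uniformSphere d r) := by
  have : Nonempty (Fin d) := ⟨⟨0, hd⟩⟩
  have hne : (volume : Measure (Euc d)).toSphere univ ≠ 0 := by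
    rw [Ne, Measure.measure_univ_eq_zero]
    exact Measure.toSphere_ne_zero _
  refine ⟨?_⟩
  rw [uniformSphere, Measure.smul_apply, Measure.map_apply (by fun_prop) .univ,
    Measure.map_apply measurable_subtype_coe (by simp), smul_eq_mul]
  exact ENNReal.inv_mul_cancel hne (measure_ne_top _ _)

lemma measurePreserving_uniformSphere (hd : 0 < d) (r : ℝ) (R : Euc d ≃ₗᵢ[ℝ] Euc d) :
    MeasurePreserving R (uniformSphere d r) (uniformSphere d r) := by
  have hR : Measurable R := R.continuous.measurable
  refine ⟨hR, Measure.ext fun s hs ↦ ?_⟩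
  have hcone : R ⁻¹' (Ioo (0 : ℝ) 1 • {x : Euc d | ‖x‖ = 1 ∧ r • x ∈ s}) =
      Ioo (0 : ℝ) 1 • {x : Euc d | ‖x‖ = 1 ∧ r • x ∈ R ⁻¹' s} := by
    ext x
    simp only [mem_preimage, mem_smul, mem_ofPred_eq]
    refine exists_congr fun c ↦ and_congr_right fun _ ↦ (R.symm.toEquiv.exists_congr_left.trans ?_)
    simp [← map_smul]
  rw [Measure.map_apply hR hs, uniformSphere_apply hd r hs, uniformSphere_apply hd r (hR hs),
    ← hcone]
  exact congrArg _ (R.measurePreserving.measure_preimage_equiv (f := R.toMeasurableEquiv) _)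

lemma uniformSphere_submodule_eq_zero (hr : r ≠ 0) {W : Submodule ℝ (Euc d)} (hW : W ≠ ⊤) :
    uniformSphere d r W = 0 := by
  obtain ⟨u, -, hu⟩ := SetLike.exists_of_lt hW.lt_top
  have hd := pos_of_euc_ne_zero (u := u) fun h ↦ hu (h ▸ W.zero_mem)
  have hsub : Ioo (0 : ℝ) 1 • {x : Euc d | ‖x‖ = 1 ∧ r • x ∈ W} ⊆ W := by
    rintro _ ⟨a, -, y, ⟨-, hy⟩, rfl⟩
    exact W.smul_mem a ((W.smul_mem_iff hr).1 hy)
  rw [uniformSphere_apply hd r W.closed_of_finiteDimensional.measurableSet]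
  simp only [SetLike.mem_coe]
  rw [measure_mono_null hsub (Measure.addHaar_submodule volume W hW), mul_zero]

lemma uniformSphere_slab_le (hr : 0 < r) {u : Euc d} (hu : u ≠ 0) {s : ℝ} (hs : 0 < s) :
    uniformSphere d r {x | |⟪u, x⟫| ≤ s} ≤
      ENNReal.ofReal (√(Real.exp 1 * (d + 1)) * (s / (‖u‖ * r))) := by
  have hd := pos_of_euc_ne_zero hu
  have : 0 < ‖u‖ := norm_pos_iff.2 hu
  have hsub : Ioo (0 : ℝ) 1 • {x : Euc d | ‖x‖ = 1 ∧ |⟪u, r • x⟫| ≤ s} ⊆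
      {x | ‖x‖ ≤ 1 ∧ |⟪‖u‖⁻¹ • u, x⟫| ≤ s / (‖u‖ * r)} := by
    rintro _ ⟨c, ⟨hc0, hc1⟩, x, ⟨hx, hxs⟩, rfl⟩
    rw [inner_smul_right, abs_mul, abs_of_pos hr] at hxs
    refine ⟨by simp [norm_smul, hx, abs_of_pos hc0, hc1.le], ?_⟩
    simp only [inner_smul_left, inner_smul_right, abs_mul, abs_of_pos hc0, conj_trivial, abs_inv,
      abs_norm]
    rw [le_div_iff₀ (by positivity)]
    calc c * (‖u‖⁻¹ * |⟪u, x⟫|) * (‖u‖ * r) = c * (r * |⟪u, x⟫|) := by field_simp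
      _ ≤ 1 * s := by gcongr
      _ = s := one_mul s
  have hvol := volume_slab_le (norm_smul_inv_norm (𝕜 := ℝ) hu) (t := s / (‖u‖ * r)) (by positivity)
  rw [uniformSphere_apply hd r (by measurability), ← ENNReal.div_eq_inv_mul]
  refine ENNReal.div_le_of_le_mul ((measure_mono hsub).trans ?_)
  simpa using hvol

lemma one_le_measureReal_slab_add_two_mul (hd : 0 < d) (r : ℝ) (u : Euc d) (s : ℝ) :
    1 ≤ (uniformSphere d r).real {x | |⟪u, x⟫| ≤ s} +
      2 * (uniformSphere d r).real {x | ⟪u, x⟫ < -s} := by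
  have := isProbabilityMeasure_uniformSphere hd r
  have hneg : (uniformSphere d r).real {x | s < ⟪u, x⟫} =
      (uniformSphere d r).real {x | ⟪u, x⟫ < -s} := by
    have hpre : {x : Euc d | s < ⟪u, x⟫} = LinearIsometryEquiv.neg ℝ ⁻¹' {x | ⟪u, x⟫ < -s} := by
      ext x
      simp
    rw [hpre, (measurePreserving_uniformSphere hd r _).measureReal_preimage
      (MeasurableSet.nullMeasurableSet (by measurability))]
  have hcover : (univ : Set (Euc d)) ⊆
      {x | |⟪u, x⟫| ≤ s} ∪ ({x | s < ⟪u, x⟫} ∪ {x | ⟪u, x⟫ < -s}) := fun x _ ↦ by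
    simp only [mem_union, mem_ofPred_eq]
    rcases le_or_gt |⟪u, x⟫| s with h | h
    · exact .inl h
    · exact .inr ((lt_abs.1 h).imp_right lt_neg_of_lt_neg)
  calc 1 = (uniformSphere d r).real univ := by simp
    _ ≤ _ := (measureReal_mono hcover).trans <| (measureReal_union_le _ _).trans
        (add_le_add_right (measureReal_union_le _ _) _)
    _ = _ := by rw [hneg, two_mul]

lemma one_quarter_le_measureReal_farHalfSpace {u : Euc d} (hu : u ≠ 0)
    (hr : 2 * √(Real.exp 1 * (d + 1)) * ‖u‖ ≤ r) :
    1 / 4 ≤ (uniformSphere d r).real (farHalfSpace u) := by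
  have : 0 < ‖u‖ := norm_pos_iff.2 hu
  have hr0 : 0 < r := lt_of_lt_of_le (by positivity) hr
  have hslab : (uniformSphere d r).real {x | |⟪u, x⟫| ≤ ‖u‖ ^ 2} ≤ 1 / 2 := by
    refine ENNReal.toReal_le_of_le_ofReal (by norm_num)
      ((uniformSphere_slab_le hr0 hu (by positivity)).trans (ENNReal.ofReal_le_ofReal ?_))
    field_simp
    linarith
  have hcover := one_le_measureReal_slab_add_two_mul (pos_of_euc_ne_zero hu) r u (‖u‖ ^ 2)
  rw [farHalfSpace]
  linarith

end UniformSphere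

section Separability

open Module

variable {ι : Type*} {d : ℕ} {r : ℝ}

lemma IsLinSep.mem_oneSidedSet (hd : 1 < d) {x₁ x₂ w : Euc d} (hx : x₁ ≠ x₂) {b : ℝ}
    {z : ι → Euc d}
    (h : IsLinSep w b ({(x₁, (1 : ℝ)), (x₂, (-1 : ℝ))} ∪ range fun j ↦ (x₁ + z j, (1 : ℝ)))) :
    z ∈ oneSidedSet ι (ℝ ∙ (x₁ - x₂))ᗮ.orthogonalProjectionOnto (farHalfSpace (x₁ - x₂)) := by
  obtain ⟨hw, hsep⟩ := h
  have h₁ := hsep (x₁, 1) (by simp)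
  have h₂ := hsep (x₂, -1) (by simp)
  have hz (j : ι) := hsep (x₁ + z j, 1) (by simp)
  simp only [inner_add_right] at h₁ h₂ hz
  refine mem_oneSidedSet_of_forall_inner_nonneg (by simpa using hd) (sub_ne_zero.2 hx) hw ?_
    fun j ↦ ?_
  · rw [inner_sub_right]
    linarith
  · rw [inner_add_right, inner_sub_right]
    linarith [hz j]

theorem measureReal_oneSidedSet_uniformSphere_le [Fintype ι] {u : Euc d} (hu : u ≠ 0)
    (hr : 2 * √(Real.exp 1 * (d + 1)) * ‖u‖ ≤ r) :
    (Measure.pi fun _ ↦ uniformSphere d r).real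
        (oneSidedSet ι (ℝ ∙ u)ᗮ.orthogonalProjectionOnto (farHalfSpace u)) ≤
      2 ^ (d - 1) * (15 / 16) ^ Fintype.card ι := by
  have hd := pos_of_euc_ne_zero hu
  have := isProbabilityMeasure_uniformSphere hd r
  have hr0 : r ≠ 0 := (lt_of_lt_of_le (by positivity) hr).ne'
  have hsurj : Function.Surjective (ℝ ∙ u)ᗮ.orthogonalProjectionOnto := fun v ↦
    ⟨v, (ℝ ∙ u)ᗮ.orthogonalProjectionOnto_mem_subspace_eq_self v⟩
  have hnull (W : Submodule ℝ (ℝ ∙ u)ᗮ) (hW : W ≠ ⊤) :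
      uniformSphere d r ((ℝ ∙ u)ᗮ.orthogonalProjectionOnto ⁻¹' W) = 0 :=
    uniformSphere_submodule_eq_zero hr0
      (W := W.comap (ℝ ∙ u)ᗮ.orthogonalProjectionOnto.toLinearMap) fun h ↦
      hW (Submodule.comap_injective_of_surjective hsurj (h.trans (Submodule.comap_top _).symm))
  have hfinrank : finrank ℝ (ℝ ∙ u)ᗮ = d - 1 := by
    rw [finrank_orthogonal_span_singleton_eq_sub_one hu, finrank_euclideanSpace_fin]
  have hle := pow_mul_measureReal_oneSidedSet_le (ι := ι) (t := 1 / 2)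
    (measurePreserving_uniformSphere hd r (ℝ ∙ u).reflection)
    (fun x ↦ reflection_mem_farHalfSpace) (isOpen_farHalfSpace u) (by fun_prop)
    (orthogonalProjectionOnto_orthogonal_reflection (ℝ ∙ u)) hnull (by norm_num) (by norm_num)
  have hfar : 1 / 4 ≤ (uniformSphere d r).real (farHalfSpace u) :=
    one_quarter_le_measureReal_farHalfSpace hu hr
  have hbase : 0 ≤ 1 - (1 - 1 / 2) / 2 * (uniformSphere d r).real (farHalfSpace u) := by
    linarith [measureReal_le_one (μ := uniformSphere d r) (s := farHalfSpace u)]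
  rw [hfinrank, one_div_pow, one_div, inv_mul_le_iff₀ (by positivity)] at hle
  refine hle.trans ?_
  gcongr
  linarith

theorem ofReal_one_sub_le_measure_not_isLinSep [Fintype ι] (hd : 1 < d) {x₁ x₂ : Euc d}
    (hx : x₁ ≠ x₂) (hr : 2 * √(Real.exp 1 * (d + 1)) * ‖x₁ - x₂‖ ≤ r) :
    ENNReal.ofReal (1 - 2 ^ (d - 1) * (15 / 16) ^ Fintype.card ι) ≤
      (Measure.pi fun _ : ι ↦ uniformSphere d r)
        {z | ¬ ∃ w b, IsLinSep w b
          ({(x₁, (1 : ℝ)), (x₂, (-1 : ℝ))} ∪ range fun j ↦ (x₁ + z j, (1 : ℝ)))} := by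
  have := isProbabilityMeasure_uniformSphere (zero_lt_one.trans hd) r
  set B := oneSidedSet ι (ℝ ∙ (x₁ - x₂))ᗮ.orthogonalProjectionOnto (farHalfSpace (x₁ - x₂))
  have hB : MeasurableSet B :=
    (isClosed_oneSidedSet (by fun_prop) (isOpen_farHalfSpace _)).measurableSet
  have hBle : (Measure.pi fun _ ↦ uniformSphere d r).real B ≤ _ :=
    measureReal_oneSidedSet_uniformSphere_le (sub_ne_zero.2 hx) hr
  calc ENNReal.ofReal (1 - 2 ^ (d - 1) * (15 / 16) ^ Fintype.card ι)
      ≤ ENNReal.ofReal ((Measure.pi fun _ ↦ uniformSphere d r).real Bᶜ) := by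
        rw [probReal_compl_eq_one_sub hB]
        gcongr
    _ = (Measure.pi fun _ ↦ uniformSphere d r) Bᶜ := ofReal_measureReal
    _ ≤ _ := by
        refine measure_mono ?_
        rintro z hz ⟨w, b, hsep⟩
        exact hz (hsep.mem_oneSidedSet hd hx)

end Separability

section Constants

lemma four_mul_sqrt_le_radius_factor {d : ℕ} (hd : 0 < d) :
    4 * √(Real.exp 1 * (d + 1)) ≤
      8 * Real.exp 1 ^ 2 * √(2 * d) / Real.pi ^ ((3 : ℝ) / 2) := by
  have hd1 : (1 : ℝ) ≤ d := mod_cast hd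
  have he : (2.7 : ℝ) ≤ Real.exp 1 := by linarith [Real.exp_one_gt_d9]
  have hpi : Real.pi ^ 3 ≤ 2 ^ 2 * Real.exp 1 ^ 3 :=
    calc Real.pi ^ 3 ≤ 3.15 ^ 3 := by gcongr; exact Real.pi_lt_d2.le
      _ ≤ 2 ^ 2 * 2.7 ^ 3 := by norm_num
      _ ≤ 2 ^ 2 * Real.exp 1 ^ 3 := by gcongr
  rw [le_div_iff₀ (by positivity)]
  refine (sq_le_sq₀ (by positivity) (by positivity)).1 ?_
  have hpow : (Real.pi ^ ((3 : ℝ) / 2)) ^ 2 = Real.pi ^ 3 := by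
    rw [← Real.rpow_mul_natCast Real.pi_pos.le, ← Real.rpow_natCast]
    norm_num
  simp only [mul_pow, hpow, Real.sq_sqrt (show 0 ≤ Real.exp 1 * ((d : ℝ) + 1) by positivity),
    Real.sq_sqrt (show (0 : ℝ) ≤ 2 * d by positivity)]
  calc 4 ^ 2 * (Real.exp 1 * (d + 1)) * Real.pi ^ 3
      ≤ 4 ^ 2 * (Real.exp 1 * (d + d)) * (2 ^ 2 * Real.exp 1 ^ 3) := by gcongr
    _ = 8 ^ 2 * (Real.exp 1 ^ 2) ^ 2 * (2 * d) := by ring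

lemma two_pow_mul_pow_le_exp {d N : ℕ} (hN : 16 * d ≤ N) :
    2 ^ (d - 1) * (15 / 16 : ℝ) ^ N ≤ Real.exp (-(d : ℝ) / 6) := by
  have hbase : 2 * (15 / 16 : ℝ) ^ 16 ≤ Real.exp (-1 / 6) :=
    le_trans (by norm_num) (Real.add_one_le_exp (-1 / 6))
  calc 2 ^ (d - 1) * (15 / 16 : ℝ) ^ N ≤ 2 ^ d * (15 / 16) ^ (16 * d) := by
        gcongr ?_ * ?_
        · exact pow_le_pow_right₀ one_le_two (Nat.sub_le d 1)
        · exact pow_le_pow_of_le_one (by norm_num) (by norm_num) hN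
    _ = (2 * (15 / 16) ^ 16) ^ d := by rw [mul_pow, pow_mul]
    _ ≤ Real.exp (-1 / 6) ^ d := by gcongr
    _ = Real.exp (-(d : ℝ) / 6) := by
        rw [← Real.exp_nat_mul]
        ring_nf

end Constants

/-- Theorem 8 of the paper: for `S = {(x₁,1),(x₂,-1)}` with
`d(x₁,x₂) = 2γ*`, if `X₊'` consists of `N ≥ 16d` uniform points on the sphere of radius
`r ≥ (8e²√(2d)/π^{3/2})γ*` around `x₁`, then with probability at least `1 - 2e^{-d/6}`
the augmented set is not linearly separable. -/
theorem large_radius_breaks_separability {d : ℕ} (hd : 0 < d)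
    (x₁ x₂ : Euc d) (γstar : ℝ) (hγ : 0 < γstar) (hdist : dist x₁ x₂ = 2 * γstar)
    (N : ℕ) (hN : 16 * d ≤ N) (r : ℝ)
    (hr : 8 * Real.exp 1 ^ 2 * Real.sqrt (2 * d) / Real.pi ^ ((3 : ℝ) / 2) * γstar ≤ r) :
    ENNReal.ofReal (1 - 2 * Real.exp (-(d : ℝ) / 6)) ≤
      (Measure.pi fun _ : Fin N => uniformSphere d r)
        {z | ¬ ∃ w b, IsLinSep w b
          (({(x₁, (1 : ℝ)), (x₂, (-1 : ℝ))} : Set (Euc d × ℝ)) ∪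
            Set.range fun j : Fin N => (x₁ + z j, (1 : ℝ)))} := by
  obtain rfl | hd1 : d = 1 ∨ 1 < d := by omega
  · have hneg : 1 - 2 * Real.exp (-((1 : ℕ) : ℝ) / 6) ≤ 0 := by
      linarith [Real.add_one_le_exp (-((1 : ℕ) : ℝ) / 6), Nat.cast_one (R := ℝ)]
    rw [ENNReal.ofReal_of_nonpos hneg]
    exact zero_le
  have hx : x₁ ≠ x₂ := dist_pos.1 (by rw [hdist]; positivity)
  have hradius : 2 * √(Real.exp 1 * (d + 1)) * ‖x₁ - x₂‖ ≤ r := by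
    rw [← dist_eq_norm, hdist]
    linarith [mul_le_mul_of_nonneg_right (four_mul_sqrt_le_radius_factor hd) hγ.le]
  refine le_trans (ENNReal.ofReal_le_ofReal ?_)
    (ofReal_one_sub_le_measure_not_isLinSep hd1 hx hradius)
  rw [Fintype.card_fin]
  linarith [two_pow_mul_pow_le_exp hN, Real.exp_pos (-(d : ℝ) / 6)]
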